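/- arXiv:2105.02307 — 2 statements merged into one kernel-verified Lean document; each statement's English description precedes it below -/
import Mathlib

section
/- The subalgebra of ℂ[t₁,t₂,t₃,t₄] consisting of all polynomials p with ψ_λ(p) = p for every λ ∈ ℂˣ and σ(p) = p equals the ℂ-subalgebra generated by the four elements t₁t₃, t₂t₄, t₂t₃ + t₁t₄, t₁t₂t₃t₄. -/
/-!
Put `a = t₁t₃`, `b = t₂t₄`, `c = t₁t₄`, `d = t₂t₃`, so that `cd = ab`. The automorphism `ψ_λ` scales
the monomial `t₁^m₁ t₂^m₂ t₃^m₃ t₄^m₄` by `λ^(m₁ + m₂ - m₃ - m₄)`, so (already for `λ = 2`) an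
invariant polynomial involves only balanced monomials, those with `m₁ + m₂ = m₃ + m₄`
(`balanced_of_invariant`). A balanced monomial is `a^i b^j c^k` or `a^i b^j d^k`, and `σ` fixes `a`,
`b` and swaps `c`, `d`; hence a balanced monomial plus its `σ`-image is `a^i b^j (c^k + d^k)`, and the
power sum `c^k + d^k` is a polynomial in `c + d` and `cd = ab` (`orbit_sum_mem`). Finally, a
`σ`-invariant `p` equals `(p + σ p) / 2`, a linear combination of such orbit sums.
-/

open MvPolynomial

/-- For `λ ∈ ℂˣ`, the endomorphism `ψ_λ` of `ℂ[t₁,t₂,t₃,t₄]` determined by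
`t₁ ↦ λt₁`, `t₂ ↦ λt₂`, `t₃ ↦ λ⁻¹t₃`, `t₄ ↦ λ⁻¹t₄`. -/
noncomputable def ψ (l : ℂˣ) : MvPolynomial (Fin 4) ℂ →ₐ[ℂ] MvPolynomial (Fin 4) ℂ :=
  aeval ![(l : ℂ) • X 0, (l : ℂ) • X 1, ((l⁻¹ : ℂˣ) : ℂ) • X 2, ((l⁻¹ : ℂˣ) : ℂ) • X 3]

/-- The involution `σ` of `ℂ[t₁,t₂,t₃,t₄]` determined by `t₁ ↔ t₃`, `t₂ ↔ t₄`. -/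
noncomputable def σinv : MvPolynomial (Fin 4) ℂ →ₐ[ℂ] MvPolynomial (Fin 4) ℂ :=
  aeval ![X 2, X 3, X 0, X 1]

/-- Power sums of two elements lie in any subalgebra containing their sum and product. -/
lemma pow_add_pow_mem {R : Type*} [CommRing R] [Algebra ℂ R] (S : Subalgebra ℂ R) {c d : R}
    (hs : c + d ∈ S) (hp : c * d ∈ S) (k : ℕ) : c ^ k + d ^ k ∈ S := by
  induction k using Nat.twoStepInduction with
  | zero => simpa using S.add_mem S.one_mem S.one_mem
  | one => simpa using hs
  | more n h0 h1 =>
    have h : c ^ (n + 2) + d ^ (n + 2)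
        = (c + d) * (c ^ (n + 1) + d ^ (n + 1)) - c * d * (c ^ n + d ^ n) := by ring
    rw [h]
    exact S.sub_mem (S.mul_mem hs h1) (S.mul_mem hp h0)

/-- The sum of a balanced monomial in `x, y, z, w` and its image under `x ↔ z`, `y ↔ w` lies in any
subalgebra containing `xz`, `yw` and `yz + xw`. -/
lemma orbit_sum_mem {R : Type*} [CommRing R] [Algebra ℂ R] (S : Subalgebra ℂ R) {x y z w : R}
    (ha : x * z ∈ S) (hb : y * w ∈ S) (hs : y * z + x * w ∈ S) {m n p q : ℕ}
    (h : m + n = p + q) :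
    x ^ m * y ^ n * z ^ p * w ^ q + z ^ m * w ^ n * x ^ p * y ^ q ∈ S := by
  have hp : (y * z) * (x * w) ∈ S := by
    have := S.mul_mem ha hb
    rwa [show (y * z) * (x * w) = x * z * (y * w) by ring]
  rcases le_total p m with hpm | hpm
  · obtain ⟨k, rfl⟩ := Nat.exists_eq_add_of_le hpm
    obtain rfl : q = n + k := by omega
    have := S.mul_mem (S.mul_mem (S.pow_mem ha p) (S.pow_mem hb n)) (pow_add_pow_mem S hs hp k)
    convert this using 1
    ring
  · obtain ⟨k, rfl⟩ := Nat.exists_eq_add_of_le hpm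
    obtain rfl : n = q + k := by omega
    have := S.mul_mem (S.mul_mem (S.pow_mem ha m) (S.pow_mem hb q)) (pow_add_pow_mem S hs hp k)
    convert this using 1
    ring

/-- `ψ l` acts diagonally on monomials, with weight `m 0 + m 1 - m 2 - m 3`. -/
lemma coeff_ψ (l : ℂˣ) (p : MvPolynomial (Fin 4) ℂ) (m : Fin 4 →₀ ℕ) :
    coeff m (ψ l p) =
      (l : ℂ) ^ (m 0 + m 1) * ((l⁻¹ : ℂˣ) : ℂ) ^ (m 2 + m 3) * coeff m p := by
  have hmon (n : Fin 4 →₀ ℕ) (r : ℂ) : ψ l (monomial n r) =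
      C ((l : ℂ) ^ (n 0 + n 1) * ((l⁻¹ : ℂˣ) : ℂ) ^ (n 2 + n 3)) * monomial n r := by
    rw [ψ, aeval_monomial, monomial_eq, Finsupp.prod_fintype _ _ (fun _ => pow_zero _),
      Finsupp.prod_fintype _ _ (fun _ => pow_zero _)]
    simp only [Fin.prod_univ_four, smul_eq_C_mul, Matrix.cons_val, algebraMap_eq, map_mul, map_pow]
    ring
  induction p using MvPolynomial.induction_on' with
  | monomial n r =>
    rw [hmon, coeff_C_mul, coeff_monomial]
    split_ifs with h
    · rw [h]
    · simp
  | add p q hp hq => rw [map_add, coeff_add, coeff_add, hp, hq, mul_add]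

lemma balanced_of_invariant {p : MvPolynomial (Fin 4) ℂ} (h : ∀ l : ℂˣ, ψ l p = p)
    {m : Fin 4 →₀ ℕ} (hm : coeff m p ≠ 0) : m 0 + m 1 = m 2 + m 3 := by
  -- `2` is not a root of unity, so `ψ 2` alone detects the weight of a monomial.
  have h2 := coeff_ψ (Units.mk0 2 two_ne_zero) p m
  rw [h, eq_comm, mul_eq_right₀ hm] at h2
  simp only [Units.val_inv_eq_inv_val, Units.val_mk0, inv_pow] at h2
  rw [mul_inv_eq_one₀ (pow_ne_zero _ two_ne_zero)] at h2
  exact Nat.pow_right_injective le_rfl (by exact_mod_cast h2)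

/-- The subalgebra of polynomials invariant under all `ψ_λ` and under `σ` is generated
by `t₁t₃`, `t₂t₄`, `t₂t₃ + t₁t₄`, `t₁t₂t₃t₄`. -/
theorem stmt_10 :
    {p : MvPolynomial (Fin 4) ℂ | (∀ l : ℂˣ, ψ l p = p) ∧ σinv p = p} =
      ↑(Algebra.adjoin ℂ
        {(X 0 * X 2 : MvPolynomial (Fin 4) ℂ), X 1 * X 3, X 1 * X 2 + X 0 * X 3,
          X 0 * X 1 * X 2 * X 3}) := by
  set S := Algebra.adjoin ℂ
        {(X 0 * X 2 : MvPolynomial (Fin 4) ℂ), X 1 * X 3, X 1 * X 2 + X 0 * X 3,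
          X 0 * X 1 * X 2 * X 3} with hS
  have ha : (X 0 * X 2 : MvPolynomial (Fin 4) ℂ) ∈ S := Algebra.subset_adjoin (by simp)
  have hb : (X 1 * X 3 : MvPolynomial (Fin 4) ℂ) ∈ S := Algebra.subset_adjoin (by simp)
  have hs : (X 1 * X 2 + X 0 * X 3 : MvPolynomial (Fin 4) ℂ) ∈ S :=
    Algebra.subset_adjoin (by simp)
  apply Set.Subset.antisymm
  · rintro p ⟨hψ, hσ⟩
    have hmon (m : Fin 4 →₀ ℕ) (hm : coeff m p ≠ 0) (r : ℂ) :
        monomial m r + σinv (monomial m r) ∈ S := by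
      have := S.smul_mem (orbit_sum_mem S ha hb hs (balanced_of_invariant hψ hm)) r
      convert this using 1
      rw [σinv, aeval_monomial, monomial_eq, Finsupp.prod_fintype _ _ (fun _ => pow_zero _),
        Finsupp.prod_fintype _ _ (fun _ => pow_zero _)]
      simp only [Fin.prod_univ_four, smul_eq_C_mul, Matrix.cons_val, algebraMap_eq]
      ring
    have hsum : p + σinv p ∈ S := by
      have : p + σinv p = ∑ m ∈ p.support,
          (monomial m (coeff m p) + σinv (monomial m (coeff m p))) := by
        rw [Finset.sum_add_distrib, ← map_sum, support_sum_monomial_coeff]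
      rw [this]
      exact S.sum_mem fun m hm => hmon m (mem_support_iff.mp hm) _
    rw [hσ, ← two_smul ℂ p] at hsum
    simpa using S.smul_mem hsum (2⁻¹ : ℂ)
  · have hψ (l : ℂˣ) : S ≤ AlgHom.equalizer (ψ l) (AlgHom.id ℂ _) := by
      have hl : (C (l : ℂ) : MvPolynomial (Fin 4) ℂ) * C ((l⁻¹ : ℂˣ) : ℂ) = 1 := by
        rw [← C_mul, Units.mul_inv, C_1]
      rw [hS, Algebra.adjoin_le_iff]
      rintro _ (rfl | rfl | rfl | rfl) <;>
        simp only [SetLike.mem_coe, AlgHom.mem_equalizer, AlgHom.id_apply, ψ, map_mul, map_add,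
          aeval_X, Matrix.cons_val, smul_eq_C_mul]
      · linear_combination X 0 * X 2 * hl
      · linear_combination X 1 * X 3 * hl
      · linear_combination (X 1 * X 2 + X 0 * X 3) * hl
      · linear_combination X 0 * X 1 * X 2 * X 3 *
          (C (l : ℂ) * C ((l⁻¹ : ℂˣ) : ℂ) + 1) * hl
    have hσ : S ≤ AlgHom.equalizer σinv (AlgHom.id ℂ _) := by
      rw [hS, Algebra.adjoin_le_iff]
      rintro _ (rfl | rfl | rfl | rfl) <;>
        simp only [SetLike.mem_coe, AlgHom.mem_equalizer, AlgHom.id_apply, σinv, map_mul, map_add,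
          aeval_X, Matrix.cons_val] <;> ring
    exact fun p hp => ⟨fun l => hψ l hp, hσ hp⟩
end

section
/- Let B = ℂ[t₁,…,t₈]/(t₁², t₁t₂, t₃², t₃t₄). The kernel of the ℂ-algebra homomorphism ℂ[y₁,y₂,y₃,v₁,v₃,v₄] → B determined by y₁ ↦ [t₁t₃], y₂ ↦ [t₂t₄], y₃ ↦ [t₂t₃ + t₁t₄], v₁ ↦ [t₅²t₆ + t₇²t₈], v₃ ↦ [t₅t₇], v₄ ↦ [t₆t₈] is the ideal generated by y₁², y₃², y₁y₂, y₁y₃, y₂y₃. Consequently the image of this homomorphism is isomorphic as a ℂ-algebra to ℂ[u₁,u₂,u₃,u₄,u₅,u₆]/(u₁², u₂², u₁u₂, u₁u₃, u₂u₃). -/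
/-!
The five generators visibly lie in the kernel. Modulo them every polynomial has the normal form
`f(v) + y₂ f'(y₂, v) + y₁ g(v) + y₃ h(v)` (`exists_normalForm`), so it suffices to show that a
normal form in the kernel vanishes. This is tested on `ℂ`-algebra valued points of `B`
(`aeval_eq_zero_of_mem_ker`): the map `t ↦ v` is onto `ℂ³` (`exists_params`), and over each point
`v` one uses

* the points `t₁ = t₃ = 0`, `t₂ = s`, `t₄ = 1`, which give `f(v) + s f'(s, v) = 0` for all `s`;
* the point `t₁ = ε`, `t₃ = δ`, `t₂ = t₄ = 0` over `ℂ[ε, δ]/(ε², δ²)`, which gives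
  `εδ g(v) = 0`;
* the point `t₁ = ε`, `t₄ = 1`, `t₂ = t₃ = 0` over the dual numbers, which gives `ε h(v) = 0`.

A complex polynomial vanishing at every point is zero, so `f`, `f'`, `g`, `h` are all zero. The
isomorphism is the first isomorphism theorem together with the exchange of two variables.
-/

open MvPolynomial

/-- The ideal `(t₁², t₁t₂, t₃², t₃t₄)` of `ℂ[t₁,…,t₈]` (with `tᵢ = X (i-1)`). -/
noncomputable def Irel8 : Ideal (MvPolynomial (Fin 8) ℂ) :=
  Ideal.span {X 0 ^ 2, X 0 * X 1, X 2 ^ 2, X 2 * X 3}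

/-- The homomorphism `ℂ[y₁,y₂,y₃,v₁,v₃,v₄] → B = ℂ[t₁,…,t₈]/(t₁², t₁t₂, t₃², t₃t₄)`,
`y₁ ↦ [t₁t₃]`, `y₂ ↦ [t₂t₄]`, `y₃ ↦ [t₂t₃ + t₁t₄]`, `v₁ ↦ [t₅²t₆ + t₇²t₈]`,
`v₃ ↦ [t₅t₇]`, `v₄ ↦ [t₆t₈]`. -/
noncomputable def φ₁₆ : MvPolynomial (Fin 6) ℂ →ₐ[ℂ] MvPolynomial (Fin 8) ℂ ⧸ Irel8 :=
  aeval ![Ideal.Quotient.mk Irel8 (X 0 * X 2), Ideal.Quotient.mk Irel8 (X 1 * X 3),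
    Ideal.Quotient.mk Irel8 (X 1 * X 2 + X 0 * X 3),
    Ideal.Quotient.mk Irel8 (X 4 ^ 2 * X 5 + X 6 ^ 2 * X 7),
    Ideal.Quotient.mk Irel8 (X 4 * X 6), Ideal.Quotient.mk Irel8 (X 5 * X 7)]

/-- The ideal `(y₁², y₃², y₁y₂, y₁y₃, y₂y₃)`, the variables being ordered
`y₁, y₂, y₃, v₁, v₃, v₄`. -/
noncomputable def kerIdeal : Ideal (MvPolynomial (Fin 6) ℂ) :=
  Ideal.span {(X 0 ^ 2 : MvPolynomial (Fin 6) ℂ), X 2 ^ 2, X 0 * X 1, X 0 * X 2, X 1 * X 2}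

/-- The polynomial `f(v) + y₂ f'(y₂, v) + y₁ g(v) + y₃ h(v)`. -/
noncomputable def normalForm (f : MvPolynomial (Fin 3) ℂ) (f' : MvPolynomial (Fin 4) ℂ)
    (g h : MvPolynomial (Fin 3) ℂ) : MvPolynomial (Fin 6) ℂ :=
  aeval ![X 3, X 4, X 5] f + X 1 * aeval ![X 1, X 3, X 4, X 5] f'
    + X 0 * aeval ![X 3, X 4, X 5] g + X 2 * aeval ![X 3, X 4, X 5] h

lemma aeval_normalForm {A : Type*} [CommRing A] [Algebra ℂ A] (z : Fin 6 → A)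
    (f : MvPolynomial (Fin 3) ℂ) (f' : MvPolynomial (Fin 4) ℂ) (g h : MvPolynomial (Fin 3) ℂ) :
    aeval z (normalForm f f' g h) =
      aeval ![z 3, z 4, z 5] f + z 1 * aeval ![z 1, z 3, z 4, z 5] f'
        + z 0 * aeval ![z 3, z 4, z 5] g + z 2 * aeval ![z 3, z 4, z 5] h := by
  have h3 : (fun i => aeval z ((![X 3, X 4, X 5] : Fin 3 → MvPolynomial (Fin 6) ℂ) i))
      = ![z 3, z 4, z 5] := by
    funext i; fin_cases i <;> simp
  have h4 : (fun i => aeval z ((![X 1, X 3, X 4, X 5] : Fin 4 → MvPolynomial (Fin 6) ℂ) i))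
      = ![z 1, z 3, z 4, z 5] := by
    funext i; fin_cases i <;> simp
  have c3 (q : MvPolynomial (Fin 3) ℂ) :
      aeval z (aeval (![X 3, X 4, X 5] : Fin 3 → MvPolynomial (Fin 6) ℂ) q)
        = aeval ![z 3, z 4, z 5] q := by
    rw [← h3, ← comp_aeval_apply]
  have c4 (q : MvPolynomial (Fin 4) ℂ) :
      aeval z (aeval (![X 1, X 3, X 4, X 5] : Fin 4 → MvPolynomial (Fin 6) ℂ) q)
        = aeval ![z 1, z 3, z 4, z 5] q := by
    rw [← h4, ← comp_aeval_apply]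
  simp only [normalForm, map_add, map_mul, aeval_X, c3, c4]

/-- The normal forms are closed under multiplication by each variable modulo `kerIdeal`. -/
lemma exists_normalForm (p : MvPolynomial (Fin 6) ℂ) :
    ∃ f f' g h, p - normalForm f f' g h ∈ kerIdeal := by
  have hgen : ∀ q ∈ ({X 0 ^ 2, X 2 ^ 2, X 0 * X 1, X 0 * X 2, X 1 * X 2} :
      Set (MvPolynomial (Fin 6) ℂ)), q ∈ kerIdeal := fun q hq => Ideal.subset_span hq
  have r1 : (X 0 ^ 2 : MvPolynomial (Fin 6) ℂ) ∈ kerIdeal := hgen _ (by simp)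
  have r2 : (X 2 ^ 2 : MvPolynomial (Fin 6) ℂ) ∈ kerIdeal := hgen _ (by simp)
  have r3 : (X 0 * X 1 : MvPolynomial (Fin 6) ℂ) ∈ kerIdeal := hgen _ (by simp)
  have r4 : (X 0 * X 2 : MvPolynomial (Fin 6) ℂ) ∈ kerIdeal := hgen _ (by simp)
  have r5 : (X 1 * X 2 : MvPolynomial (Fin 6) ℂ) ∈ kerIdeal := hgen _ (by simp)
  simp only [← Ideal.Quotient.eq_zero_iff_mem, map_mul, map_pow, map_sub, sub_eq_zero]
    at r1 r2 r3 r4 r5 ⊢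
  induction p using MvPolynomial.induction_on with
  | C a => exact ⟨C a, 0, 0, 0, by simp [normalForm, ← algebraMap_eq]⟩
  | add p q hp hq =>
    obtain ⟨f, f', g, h, e⟩ := hp
    obtain ⟨a, a', b, c, e'⟩ := hq
    refine ⟨f + a, f' + a', g + b, h + c, ?_⟩
    rw [map_add, e, e']
    simp only [normalForm, map_add, map_mul]
    ring
  | mul_X p i hp =>
    obtain ⟨f, f', g, h, e⟩ := hp
    have hs : aeval ![X 1, X 3, X 4, X 5] (rename Fin.succ f)
        = aeval (![X 3, X 4, X 5] : Fin 3 → MvPolynomial (Fin 6) ℂ) f := by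
      rw [aeval_rename]; rfl
    rw [map_mul, e]
    simp only [normalForm, map_add, map_mul]
    fin_cases i
    · refine ⟨0, 0, f, 0, ?_⟩
      simp only [map_zero, Fin.zero_eta, Fin.isValue]
      linear_combination (Ideal.Quotient.mk kerIdeal (aeval ![X 1, X 3, X 4, X 5] f')) * r3
        + (Ideal.Quotient.mk kerIdeal (aeval ![X 3, X 4, X 5] g)) * r1
        + (Ideal.Quotient.mk kerIdeal (aeval ![X 3, X 4, X 5] h)) * r4
    · refine ⟨0, rename Fin.succ f + X 0 * f', 0, 0, ?_⟩
      simp only [map_zero, map_add, map_mul, hs, aeval_X, Fin.mk_one, Fin.isValue,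
        Matrix.cons_val_zero]
      linear_combination (Ideal.Quotient.mk kerIdeal (aeval ![X 3, X 4, X 5] g)) * r3
        + (Ideal.Quotient.mk kerIdeal (aeval ![X 3, X 4, X 5] h)) * r5
    · refine ⟨0, 0, 0, f, ?_⟩
      simp only [map_zero, Fin.reduceFinMk, Fin.isValue]
      linear_combination (Ideal.Quotient.mk kerIdeal (aeval ![X 1, X 3, X 4, X 5] f')) * r5
        + (Ideal.Quotient.mk kerIdeal (aeval ![X 3, X 4, X 5] g)) * r4
        + (Ideal.Quotient.mk kerIdeal (aeval ![X 3, X 4, X 5] h)) * r2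
    · refine ⟨X 0 * f, X 1 * f', X 0 * g, X 0 * h, ?_⟩
      simp
      ring
    · refine ⟨X 1 * f, X 2 * f', X 1 * g, X 1 * h, ?_⟩
      simp
      ring
    · refine ⟨X 2 * f, X 3 * f', X 2 * g, X 2 * h, ?_⟩
      simp
      ring

lemma kerIdeal_le_ker : kerIdeal ≤ RingHom.ker φ₁₆ := by
  have hgen : ∀ q ∈ ({X 0 ^ 2, X 0 * X 1, X 2 ^ 2, X 2 * X 3} :
      Set (MvPolynomial (Fin 8) ℂ)), q ∈ Irel8 := fun q hq => Ideal.subset_span hq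
  have r1 : (X 0 ^ 2 : MvPolynomial (Fin 8) ℂ) ∈ Irel8 := hgen _ (by simp)
  have r2 : (X 0 * X 1 : MvPolynomial (Fin 8) ℂ) ∈ Irel8 := hgen _ (by simp)
  have r3 : (X 2 ^ 2 : MvPolynomial (Fin 8) ℂ) ∈ Irel8 := hgen _ (by simp)
  have r4 : (X 2 * X 3 : MvPolynomial (Fin 8) ℂ) ∈ Irel8 := hgen _ (by simp)
  simp only [← Ideal.Quotient.eq_zero_iff_mem, map_mul, map_pow] at r1 r2 r3 r4
  set m := Ideal.Quotient.mk Irel8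
  rw [kerIdeal, Ideal.span_le]
  rintro q (rfl | rfl | rfl | rfl | rfl) <;>
    simp [RingHom.mem_ker, φ₁₆]
  · linear_combination (m (X 2)) ^ 2 * r1
  · linear_combination (m (X 1)) ^ 2 * r3 + (m (X 3)) ^ 2 * r1
      + 2 * m (X 2) * m (X 3) * r2
  · linear_combination m (X 2) * m (X 3) * r2
  · linear_combination m (X 2) ^ 2 * r2 + m (X 2) * m (X 3) * r1
  · linear_combination m (X 1) ^ 2 * r4 + m (X 3) ^ 2 * r2

/-- An element of the kernel vanishes at the image of every `A`-valued point of `B`. -/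
lemma aeval_eq_zero_of_mem_ker {A : Type*} [CommRing A] [Algebra ℂ A] (t : Fin 8 → A)
    (h1 : t 0 ^ 2 = 0) (h2 : t 0 * t 1 = 0) (h3 : t 2 ^ 2 = 0) (h4 : t 2 * t 3 = 0)
    {p : MvPolynomial (Fin 6) ℂ} (hp : p ∈ RingHom.ker φ₁₆) :
    aeval ![t 0 * t 2, t 1 * t 3, t 1 * t 2 + t 0 * t 3, t 4 ^ 2 * t 5 + t 6 ^ 2 * t 7,
      t 4 * t 6, t 5 * t 7] p = 0 := by
  have hI : ∀ q ∈ Irel8, aeval t q = 0 := by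
    have : Irel8 ≤ RingHom.ker (aeval t : MvPolynomial (Fin 8) ℂ →ₐ[ℂ] A) := by
      rw [Irel8, Ideal.span_le]
      rintro q (rfl | rfl | rfl | rfl) <;> simp [RingHom.mem_ker, h1, h2, h3, h4]
    exact fun q hq => this hq
  let L : (MvPolynomial (Fin 8) ℂ ⧸ Irel8) →ₐ[ℂ] A := Ideal.Quotient.liftₐ Irel8 (aeval t) hI
  have hL (q : MvPolynomial (Fin 8) ℂ) : L (Ideal.Quotient.mk Irel8 q) = aeval t q :=
    Ideal.Quotient.lift_mk ..
  have : L (φ₁₆ p) = 0 := by rw [RingHom.mem_ker.1 hp, map_zero]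
  rw [φ₁₆, comp_aeval_apply] at this
  rw [← this]
  congr 2
  funext i
  fin_cases i <;> simp [-map_add, -map_mul, hL] <;> simp

/-- Every point of `ℂ³` is of the form `(t₅²t₆ + t₇²t₈, t₅t₇, t₆t₈)`. -/
lemma exists_params (a : Fin 3 → ℂ) : ∃ t₅ t₆ t₇ t₈ : ℂ,
    ![t₅ ^ 2 * t₆ + t₇ ^ 2 * t₈, t₅ * t₇, t₆ * t₈] = a := by
  suffices ∃ t₅ t₆ t₇ t₈ : ℂ,
      t₅ ^ 2 * t₆ + t₇ ^ 2 * t₈ = a 0 ∧ t₅ * t₇ = a 1 ∧ t₆ * t₈ = a 2 by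
    obtain ⟨x, y, z, w, h0, h1, h2⟩ := this
    refine ⟨x, y, z, w, ?_⟩
    funext i
    fin_cases i <;> simp [h0, h1, h2]
  by_cases hb : a 1 = 0
  · obtain ⟨r, hr⟩ := IsAlgClosed.exists_pow_nat_eq (a 0) two_pos
    exact ⟨0, a 2, r, 1, by simp [hr], by simp [hb], by simp⟩
  · -- With `t₅ = a₁`, `t₇ = 1` the numbers `a₁²t₆` and `t₈` have sum `a₀` and product `a₁²a₂`;
    -- `r` is a square root of the discriminant.
    obtain ⟨r, hr⟩ := IsAlgClosed.exists_pow_nat_eq (a 0 ^ 2 - 4 * a 1 ^ 2 * a 2) two_pos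
    refine ⟨a 1, (a 0 + r) / (2 * a 1 ^ 2), 1, (a 0 - r) / 2, ?_, by simp, ?_⟩
    · field_simp
      ring
    · field_simp
      linear_combination -hr

/-- The value of a normal form in the kernel at a point with `t₂ = 0`, lying over `a = v`. -/
lemma point_eq_zero {f : MvPolynomial (Fin 3) ℂ} {f' : MvPolynomial (Fin 4) ℂ}
    {g h : MvPolynomial (Fin 3) ℂ} (H : normalForm f f' g h ∈ RingHom.ker φ₁₆)
    {A : Type*} [CommRing A] [Algebra ℂ A] (t₁ t₃ t₄ : A) (h1 : t₁ ^ 2 = 0) (h3 : t₃ ^ 2 = 0)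
    (h4 : t₃ * t₄ = 0) (a : Fin 3 → ℂ) :
    algebraMap ℂ A (eval a f) + t₁ * t₃ * algebraMap ℂ A (eval a g)
      + t₁ * t₄ * algebraMap ℂ A (eval a h) = 0 := by
  have ev (q : MvPolynomial (Fin 3) ℂ) :
      aeval ![algebraMap ℂ A (a 0), algebraMap ℂ A (a 1), algebraMap ℂ A (a 2)] q
        = algebraMap ℂ A (eval a q) := by
    rw [← aeval_eq_eval, ← aeval_algebraMap_apply]
    congr 2
    funext i
    fin_cases i <;> simp
  obtain ⟨x, y, z, w, rfl⟩ := exists_params a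
  let c : ℂ → A := algebraMap ℂ A
  have := aeval_eq_zero_of_mem_ker ![t₁, 0, t₃, t₄, c x, c y, c z, c w]
    (by simpa using h1) (by simp) (by simpa using h3) (by simpa using h4) H
  rw [aeval_normalForm] at this
  simp only [← ev]
  simpa [c] using this

lemma normalForm_mem_ker {f : MvPolynomial (Fin 3) ℂ} {f' : MvPolynomial (Fin 4) ℂ}
    {g h : MvPolynomial (Fin 3) ℂ} (H : normalForm f f' g h ∈ RingHom.ker φ₁₆) :
    f = 0 ∧ f' = 0 ∧ g = 0 ∧ h = 0 := by
  have key1 (s : ℂ) (a : Fin 3 → ℂ) :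
      eval a f + s * eval (Fin.cons s a : Fin 4 → ℂ) f' = 0 := by
    obtain ⟨x, y, z, w, rfl⟩ := exists_params a
    have := aeval_eq_zero_of_mem_ker (![0, s, 0, 1, x, y, z, w] : Fin 8 → ℂ)
      (by simp) (by simp) (by simp) (by simp) H
    rw [aeval_normalForm] at this
    simpa [aeval_eq_eval] using this
  have hf : f = 0 := MvPolynomial.funext fun a => by simpa using key1 0 a
  have hf' : f' = 0 := by
    have : X 0 * f' = 0 := MvPolynomial.funext fun b => by
      have := key1 (b 0) (Fin.tail b)
      rw [Fin.cons_self_tail] at this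
      simpa [hf] using this
    simpa using this
  refine ⟨hf, hf', MvPolynomial.funext fun a => ?_, MvPolynomial.funext fun a => ?_⟩
  · -- `ℂ[ε, δ]/(ε², δ²)` is encoded as the dual numbers over the dual numbers.
    have := point_eq_zero H (A := DualNumber (DualNumber ℂ)) (TrivSqZeroExt.inl DualNumber.eps)
      DualNumber.eps 0 (by simp [pow_two, ← TrivSqZeroExt.inl_mul]) (by simp [pow_two])
      (by simp) a
    have := congrArg (fun u => TrivSqZeroExt.snd (TrivSqZeroExt.snd u)) this
    simpa [hf, TrivSqZeroExt.algebraMap_eq_inl'] using this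
  · have := point_eq_zero H (A := DualNumber ℂ) DualNumber.eps 0 1 (by simp [pow_two])
      (by simp) (by simp) a
    have := congrArg TrivSqZeroExt.snd this
    simpa [hf, TrivSqZeroExt.algebraMap_eq_inl'] using this

lemma ker_eq_kerIdeal : RingHom.ker φ₁₆ = kerIdeal := by
  refine le_antisymm (fun p hp => ?_) kerIdeal_le_ker
  obtain ⟨f, f', g, h, e⟩ := exists_normalForm p
  have H : normalForm f f' g h ∈ RingHom.ker φ₁₆ := by
    simpa using sub_mem hp (kerIdeal_le_ker e)
  obtain ⟨rfl, rfl, rfl, rfl⟩ := normalForm_mem_ker H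
  simpa [normalForm] using e

/-- The kernel of `φ₁₆` is the ideal `(y₁², y₃², y₁y₂, y₁y₃, y₂y₃)`; consequently the
image of `φ₁₆` is isomorphic to `ℂ[u₁,…,u₆]/(u₁², u₂², u₁u₂, u₁u₃, u₂u₃)`. -/
theorem stmt_16 :
    RingHom.ker φ₁₆ =
      Ideal.span {(X 0 ^ 2 : MvPolynomial (Fin 6) ℂ), X 2 ^ 2, X 0 * X 1, X 0 * X 2,
        X 1 * X 2} ∧
    Nonempty
      ((MvPolynomial (Fin 6) ℂ ⧸
          Ideal.span {(X 0 ^ 2 : MvPolynomial (Fin 6) ℂ), X 1 ^ 2, X 0 * X 1,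
            X 0 * X 2, X 1 * X 2}) ≃ₐ[ℂ] φ₁₆.range) := by
  refine ⟨ker_eq_kerIdeal, ⟨?_⟩⟩
  have hmap : RingHom.ker φ₁₆ = Ideal.map
      (renameEquiv ℂ (Equiv.swap (1 : Fin 6) 2) :
        MvPolynomial (Fin 6) ℂ →+* MvPolynomial (Fin 6) ℂ)
      (Ideal.span {(X 0 ^ 2 : MvPolynomial (Fin 6) ℂ), X 1 ^ 2, X 0 * X 1,
        X 0 * X 2, X 1 * X 2}) := by
    have h0 : Equiv.swap (1 : Fin 6) 2 0 = 0 := by decide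
    rw [ker_eq_kerIdeal, kerIdeal, Ideal.map_span]
    congr 1
    simp only [Set.image_insert_eq, Set.image_singleton, RingHom.coe_coe, map_mul, map_pow,
      renameEquiv_apply, rename_X, h0, Equiv.swap_apply_left, Equiv.swap_apply_right]
    rw [mul_comm (X 2) (X 1), Set.insert_comm (X 0 * X 2) (X 0 * X 1)]
  exact (Ideal.quotientEquivAlg _ _ (renameEquiv ℂ (Equiv.swap (1 : Fin 6) 2)) hmap).trans
    (Ideal.quotientKerEquivRange φ₁₆)
end
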